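/- arXiv:2103.06257 — 6 statements merged into one kernel-verified Lean document; each statement's English description precedes it below -/
import Mathlib

section
/- Fix a finite-horizon MDP with finite nonempty state space S, finite nonempty action space A, horizon T ≥ 1, initial distribution p₁, dynamics p with p(s'|s,a) > 0 everywhere, a full-support policy π, and a reward function r : S×A → ℝ. Then the minimum of E_{p^π}[Σ_{t=1}^T r̃(s_t,a_t)] over all reward functions r̃ : S×A → ℝ satisfying the robust-set constraint E_{p^π}[Σ_{t=1}^T log Σ_{a'∈A} exp(r(s_t,a') − r̃(s_t,a'))] ≤ 0 is attained and equals the MaxEnt objective J_MaxEnt(π; p, r); in particular, a minimizer is r̃(s,a) = r(s,a) − log π(a|s). (Theorem 1: MaxEnt RL equals robust RL over an adversarial set of reward functions, with the KKT threshold made explicit.) -/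
/-!
The optimality of `r̃ = r − log π` is the nonnegativity of a Kullback–Leibler divergence between two
trajectory laws. For a reward `r̃` put `Z(s) = Σ_a exp (r(s,a) − r̃(s,a))` and let
`q(a|s) = exp (r(s,a) − r̃(s,a)) / Z(s)` be the associated Boltzmann policy. Then
`Σ_t (r − r̃ − log π)(s_t,a_t) = Σ_t log Z(s_t) + Σ_t log (q(a_t|s_t) / π(a_t|s_t))`.
Where `p^π(τ) > 0` the initial law and the dynamics cancel in the ratio `p^q(τ) / p^π(τ)`, so the last
sum is the log of that ratio; by `log x ≤ x − 1` its
expectation under `p^π` is at most `Σ_τ p^q(τ) − 1 = 0` (`sum_trajProb`, `Exp_log_ratio_nonpos`).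
The robust-set constraint says that `Σ_t log Z(s_t)` has nonpositive expectation, whence
`J_MaxEnt(π) ≤ E[Σ_t r̃]`. For `r̃ = r − log π` one has `Z = 1`, so this `r̃` is feasible and attains
the bound.
-/

open Finset Real

/-- Probability of a trajectory `(states, actions)` in a finite-horizon MDP with horizon `T`,
initial distribution `p1`, dynamics `p` and policy `pol`. -/
noncomputable def trajProb {S A : Type*} [Fintype S] [Fintype A] (T : ℕ)
    (p1 : S → ℝ) (p : S → A → S → ℝ) (pol : S → A → ℝ)
    (τ : (Fin (T + 1) → S) × (Fin T → A)) : ℝ :=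
  p1 (τ.1 0) * ∏ t : Fin T,
    pol (τ.1 t.castSucc) (τ.2 t) * p (τ.1 t.castSucc) (τ.2 t) (τ.1 t.succ)

/-- Expectation of a trajectory functional under the trajectory distribution `p^π`. -/
noncomputable def Exp {S A : Type*} [Fintype S] [Fintype A] (T : ℕ)
    (p1 : S → ℝ) (p : S → A → S → ℝ) (pol : S → A → ℝ)
    (f : ((Fin (T + 1) → S) × (Fin T → A)) → ℝ) : ℝ :=
  ∑ τ : (Fin (T + 1) → S) × (Fin T → A), trajProb T p1 p pol τ * f τ

/-- MaxEnt RL objective (entropy coefficient 1):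
`J_MaxEnt(π; p, r) = E_{p^π}[Σ_t (r(s_t,a_t) − log π(a_t|s_t))]`. -/
noncomputable def JMaxEnt {S A : Type*} [Fintype S] [Fintype A] (T : ℕ)
    (p1 : S → ℝ) (p : S → A → S → ℝ) (pol : S → A → ℝ) (r : S → A → ℝ) : ℝ :=
  Exp T p1 p pol (fun τ => ∑ t : Fin T,
    (r (τ.1 t.castSucc) (τ.2 t) - Real.log (pol (τ.1 t.castSucc) (τ.2 t))))

/-- Trajectory probabilities sum to one. The induction splits off the first state-action pair `(s, a)`;
the remaining trajectory has initial distribution `p s a`. -/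
theorem sum_trajProb {S A : Type*} [Fintype S] [Fintype A]
    (p : S → A → S → ℝ) (hpsum : ∀ s a, ∑ s' : S, p s a s' = 1)
    (pol : S → A → ℝ) (hpolsum : ∀ s, ∑ a : A, pol s a = 1) (T : ℕ)
    (p1 : S → ℝ) (hp1sum : ∑ s : S, p1 s = 1) :
    ∑ τ, trajProb T p1 p pol τ = 1 := by
  induction T generalizing p1 with
  | zero =>
    rw [Fintype.sum_prod_type, ← (Equiv.funUnique (Fin 1) S).symm.sum_comp]
    simpa [trajProb] using hp1sum
  | succ T ih =>
    have key : ∀ s a ss as, trajProb (T + 1) p1 p pol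
        (Fin.cons (α := fun _ => S) s ss, Fin.cons (α := fun _ => A) a as)
        = p1 s * pol s a * trajProb T (p s a) p pol (ss, as) := by
      intro s a ss as
      simp only [trajProb, Fin.prod_univ_succ, Fin.castSucc_zero, Fin.cons_zero, Fin.cons_succ,
        ← Fin.succ_castSucc]
      ring
    rw [Fintype.sum_prod_type, ← (Fin.consEquiv (fun _ : Fin (T + 2) => S)).sum_comp,
      Fintype.sum_prod_type, ← hp1sum]
    refine Finset.sum_congr rfl fun s _ => ?_
    calc _ = ∑ ss : Fin (T + 1) → S, ∑ a : A, ∑ as : Fin T → A,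
          p1 s * pol s a * trajProb T (p s a) p pol (ss, as) := by
          refine Finset.sum_congr rfl fun ss _ => ?_
          rw [← (Fin.consEquiv (fun _ : Fin (T + 1) => A)).sum_comp, Fintype.sum_prod_type]
          exact Finset.sum_congr rfl fun a _ => Finset.sum_congr rfl fun as _ => key s a ss as
      _ = ∑ a : A, p1 s * pol s a * ∑ τ, trajProb T (p s a) p pol τ := by
          rw [Finset.sum_comm]
          simp only [Fintype.sum_prod_type, Finset.mul_sum]
      _ = p1 s := by
          simp only [ih _ (hpsum _ _), mul_one, ← Finset.mul_sum, hpolsum]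

/-- Gibbs' inequality for the trajectory laws of two policies: the expected log-likelihood ratio of
`q` against `pol` is nonpositive under the law of `pol`. -/
theorem Exp_log_ratio_nonpos {S A : Type*} [Fintype S] [Fintype A] (T : ℕ)
    (p1 : S → ℝ) (hp1 : ∀ s, 0 ≤ p1 s) (hp1sum : ∑ s : S, p1 s = 1)
    (p : S → A → S → ℝ) (hp : ∀ s a s', 0 < p s a s')
    (hpsum : ∀ s a, ∑ s' : S, p s a s' = 1)
    (pol : S → A → ℝ) (hpol : ∀ s a, 0 < pol s a) (hpolsum : ∀ s, ∑ a : A, pol s a = 1)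
    (q : S → A → ℝ) (hq : ∀ s a, 0 < q s a) (hqsum : ∀ s, ∑ a : A, q s a = 1) :
    Exp T p1 p pol (fun τ => ∑ t : Fin T,
      Real.log (q (τ.1 t.castSucc) (τ.2 t) / pol (τ.1 t.castSucc) (τ.2 t))) ≤ 0 := by
  calc _ ≤ ∑ τ, (trajProb T p1 p q τ - trajProb T p1 p pol τ) := by
        refine Finset.sum_le_sum fun τ _ => ?_
        have hnn : 0 ≤ trajProb T p1 p pol τ :=
          mul_nonneg (hp1 _) (Finset.prod_nonneg fun t _ => (mul_pos (hpol _ _) (hp _ _ _)).le)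
        have hratio : trajProb T p1 p pol τ *
            ∏ t : Fin T, (q (τ.1 t.castSucc) (τ.2 t) / pol (τ.1 t.castSucc) (τ.2 t))
            = trajProb T p1 p q τ := by
          rw [trajProb, trajProb, mul_assoc, ← Finset.prod_mul_distrib]
          congr 1
          refine Finset.prod_congr rfl fun t _ => ?_
          have := (hpol (τ.1 t.castSucc) (τ.2 t)).ne'
          field_simp
        beta_reduce
        rw [← Real.log_prod fun t _ => (div_pos (hq _ _) (hpol _ _)).ne', ← hratio]
        -- `log x ≤ x - 1`, weighted by the trajectory probability
        have hlog := Real.log_le_sub_one_of_pos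
          (Finset.prod_pos (s := Finset.univ) fun (t : Fin T) _ =>
            div_pos (hq (τ.1 t.castSucc) (τ.2 t)) (hpol (τ.1 t.castSucc) (τ.2 t)))
        linarith [mul_le_mul_of_nonneg_left hlog hnn]
    _ = 0 := by
        rw [Finset.sum_sub_distrib, sum_trajProb p hpsum q hqsum T p1 hp1sum,
          sum_trajProb p hpsum pol hpolsum T p1 hp1sum, sub_self]

/-- **Theorem 1 (MaxEnt RL equals robust RL over adversarial reward functions).**
The minimum of `E_{p^π}[Σ_t r̃(s_t,a_t)]` over reward functions `r̃` in the robust set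
`E_{p^π}[Σ_t log Σ_{a'} exp(r(s_t,a') − r̃(s_t,a'))] ≤ 0` is attained and equals
`J_MaxEnt(π; p, r)`; a minimizer is `r̃ = r − log π`. -/
theorem maxent_eq_robust_reward_objective
    {S A : Type*} [Fintype S] [Fintype A] [Nonempty S] [Nonempty A]
    (T : ℕ) (hT : 1 ≤ T)
    (p1 : S → ℝ) (hp1 : ∀ s, 0 ≤ p1 s) (hp1sum : ∑ s : S, p1 s = 1)
    (p : S → A → S → ℝ) (hp : ∀ s a s', 0 < p s a s')
    (hpsum : ∀ s a, ∑ s' : S, p s a s' = 1)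
    (pol : S → A → ℝ) (hpol : ∀ s a, 0 < pol s a)
    (hpolsum : ∀ s, ∑ a : A, pol s a = 1)
    (r : S → A → ℝ) :
    IsLeast
      {x : ℝ | ∃ rt : S → A → ℝ,
        Exp T p1 p pol (fun τ => ∑ t : Fin T,
          Real.log (∑ a' : A,
            Real.exp (r (τ.1 t.castSucc) a' - rt (τ.1 t.castSucc) a'))) ≤ 0 ∧
        x = Exp T p1 p pol (fun τ => ∑ t : Fin T, rt (τ.1 t.castSucc) (τ.2 t))}
      (JMaxEnt T p1 p pol r)
    ∧ Exp T p1 p pol (fun τ => ∑ t : Fin T,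
        Real.log (∑ a' : A, Real.exp (r (τ.1 t.castSucc) a'
          - (r (τ.1 t.castSucc) a' - Real.log (pol (τ.1 t.castSucc) a'))))) ≤ 0
    ∧ Exp T p1 p pol (fun τ => ∑ t : Fin T,
        (r (τ.1 t.castSucc) (τ.2 t) - Real.log (pol (τ.1 t.castSucc) (τ.2 t))))
      = JMaxEnt T p1 p pol r := by
  have hfeas : Exp T p1 p pol (fun τ => ∑ t : Fin T,
        Real.log (∑ a' : A, Real.exp (r (τ.1 t.castSucc) a'
          - (r (τ.1 t.castSucc) a' - Real.log (pol (τ.1 t.castSucc) a'))))) ≤ 0 := by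
    simp [Exp, Real.exp_log (hpol _ _), hpolsum]
  refine ⟨⟨⟨fun s a => r s a - Real.log (pol s a), hfeas, rfl⟩, ?_⟩, hfeas, rfl⟩
  rintro x ⟨rt, hrt, rfl⟩
  have hZ : ∀ s, 0 < ∑ a : A, Real.exp (r s a - rt s a) := fun s =>
    Finset.sum_pos (fun a _ => Real.exp_pos _) Finset.univ_nonempty
  have hgibbs := Exp_log_ratio_nonpos T p1 hp1 hp1sum p hp hpsum pol hpol hpolsum
    (fun s a => Real.exp (r s a - rt s a) / ∑ a' : A, Real.exp (r s a' - rt s a'))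
    (fun s a => div_pos (Real.exp_pos _) (hZ s))
    (fun s => by rw [← Finset.sum_div, div_self (hZ s).ne'])
  have hlog : ∀ s a, Real.log
      (Real.exp (r s a - rt s a) / (∑ a' : A, Real.exp (r s a' - rt s a')) / pol s a)
      = (r s a - Real.log (pol s a)) - rt s a
        - Real.log (∑ a' : A, Real.exp (r s a' - rt s a')) := by
    intro s a
    rw [Real.log_div (div_pos (Real.exp_pos _) (hZ s)).ne' (hpol s a).ne',
      Real.log_div (Real.exp_pos _).ne' (hZ s).ne', Real.log_exp]
    ring
  simp only [hlog] at hgibbs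
  simp only [JMaxEnt, Exp, Finset.sum_sub_distrib, mul_sub] at hgibbs hrt ⊢
  linarith
end

section
/- Fix a finite-horizon MDP with finite nonempty state space S, finite nonempty action space A, horizon T ≥ 1, initial distribution p₁, dynamics p, a full-support policy π, and a reward function r : S×A → ℝ. Then for every reward function r̃ : S×A → ℝ, the penalized adversarial objective satisfies E_{p^π}[Σ_{t=1}^T (r̃(s_t,a_t) + log Σ_{a'∈A} exp(r(s_t,a') − r̃(s_t,a')))] ≥ J_MaxEnt(π; p, r), and equality holds for r̃(s,a) = r(s,a) − log π(a|s). Consequently the infimum of the penalized objective over all r̃ equals J_MaxEnt(π; p, r), and the pointwise minimizing adversarial reward is r̃ = r − log π. (Penalized form of Theorem 1 established in its proof; r − log π is the analytic worst-case reward used in the experiments.) -/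
/-!
The difference between the penalized objective and `J_MaxEnt` is `E_{p^π}[Σ_t g(s_t, a_t)]` with
`g(s, a) = r̃(s, a) + log Σ_{a'} exp (r(s, a') - r̃(s, a')) - (r(s, a) - log π(a|s))`.
For each `s` the mean of `g(s, ·)` under `π(·|s)` is nonnegative by the Gibbs variational
inequality `Σ_a π(a) (x(a) - log π(a)) ≤ log Σ_a exp (x(a))` (`gibbs_variational`), and peeling off
the first transition of a trajectory (`exp_succ`) propagates this to the whole expectation
(`exp_sum_nonneg`). For `r̃ = r - log π` the partition function is `Σ_a π(a|s) = 1`, so the penalty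
vanishes identically and the bound is attained.
-/

open Finset Real

/-- The Gibbs variational inequality; it is Jensen's inequality for `log` with weights `w` at the
points `exp (x a) / w a`. -/
lemma gibbs_variational {A : Type*} [Fintype A] (w x : A → ℝ)
    (hw : ∀ a, 0 < w a) (hsum : ∑ a, w a = 1) :
    ∑ a, w a * (x a - Real.log (w a)) ≤ Real.log (∑ a, Real.exp (x a)) := by
  have h := strictConcaveOn_log_Ioi.concaveOn.le_map_sum (t := Finset.univ) (w := w)
    (p := fun a => Real.exp (x a) / w a) (fun a _ => (hw a).le) hsum
    (fun a _ => div_pos (Real.exp_pos _) (hw a))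
  have h1 : ∀ a, w a * (Real.exp (x a) / w a) = Real.exp (x a) := fun a =>
    mul_div_cancel₀ _ (hw a).ne'
  have h2 : ∀ a, Real.log (Real.exp (x a) / w a) = x a - Real.log (w a) := fun a => by
    rw [Real.log_div (Real.exp_pos _).ne' (hw a).ne', Real.log_exp]
  simpa only [smul_eq_mul, h1, h2] using h

/-- Conditioning on the first state-action pair: what remains is a trajectory of length `T` whose
initial distribution is `p s a`. -/
lemma exp_succ {S A : Type*} [Fintype S] [Fintype A] (T : ℕ)
    (p1 : S → ℝ) (p : S → A → S → ℝ) (pol : S → A → ℝ)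
    (f : ((Fin (T + 1 + 1) → S) × (Fin (T + 1) → A)) → ℝ) :
    Exp (T + 1) p1 p pol f = ∑ s, ∑ a, p1 s * pol s a *
      Exp T (p s a) p pol (fun τ => f (Fin.cons s τ.1, Fin.cons a τ.2)) := by
  unfold Exp
  rw [Fintype.sum_prod_type, ← (Fin.consEquiv fun _ => S).sum_comp, Fintype.sum_prod_type]
  refine Finset.sum_congr rfl fun s _ => ?_
  simp_rw [← (Fin.consEquiv fun _ : Fin (T + 1) => A).sum_comp, Fintype.sum_prod_type]
  rw [Finset.sum_comm]
  refine Finset.sum_congr rfl fun a _ => ?_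
  simp_rw [Finset.mul_sum]
  refine Finset.sum_congr rfl fun σ _ => Finset.sum_congr rfl fun α _ => ?_
  change trajProb (T + 1) p1 p pol (Fin.cons s σ, Fin.cons a α) * f (Fin.cons s σ, Fin.cons a α)
    = p1 s * pol s a * (trajProb T (p s a) p pol (σ, α) * f (Fin.cons s σ, Fin.cons a α))
  simp only [trajProb, Fin.prod_univ_succ, Fin.cons_zero, Fin.cons_succ,
    Fin.castSucc_zero, ← Fin.succ_castSucc]
  ring

lemma exp_add {S A : Type*} [Fintype S] [Fintype A] (T : ℕ)
    (p1 : S → ℝ) (p : S → A → S → ℝ) (pol : S → A → ℝ)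
    (f g : ((Fin (T + 1) → S) × (Fin T → A)) → ℝ) :
    Exp T p1 p pol (fun τ => f τ + g τ) = Exp T p1 p pol f + Exp T p1 p pol g := by
  simp only [Exp, mul_add, Finset.sum_add_distrib]

lemma exp_const {S A : Type*} [Fintype S] [Fintype A] (T : ℕ)
    (p1 : S → ℝ) (hp1sum : ∑ s, p1 s = 1)
    (p : S → A → S → ℝ) (hpsum : ∀ s a, ∑ s', p s a s' = 1)
    (pol : S → A → ℝ) (hpolsum : ∀ s, ∑ a, pol s a = 1) (c : ℝ) :
    Exp T p1 p pol (fun _ => c) = c := by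
  induction T generalizing p1 with
  | zero =>
    unfold Exp trajProb
    rw [Fintype.sum_prod_type, ← (Fin.consEquiv fun _ => S).sum_comp, Fintype.sum_prod_type]
    simp [Fin.consEquiv_apply, ← Finset.sum_mul, hp1sum]
  | succ T ih =>
    rw [exp_succ]
    simp_rw [fun s a => ih (p s a) (hpsum s a), ← Finset.sum_mul, ← Finset.mul_sum, hpolsum]
    simp [hp1sum]

/-- A per-step quantity with nonnegative conditional mean given the current state has nonnegative
expected sum along a trajectory. -/
lemma exp_sum_nonneg {S A : Type*} [Fintype S] [Fintype A] (T : ℕ)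
    (p1 : S → ℝ) (hp1 : ∀ s, 0 ≤ p1 s)
    (p : S → A → S → ℝ) (hp : ∀ s a s', 0 ≤ p s a s') (hpsum : ∀ s a, ∑ s', p s a s' = 1)
    (pol : S → A → ℝ) (hpol : ∀ s a, 0 ≤ pol s a) (hpolsum : ∀ s, ∑ a, pol s a = 1)
    (g : S → A → ℝ) (hg : ∀ s, 0 ≤ ∑ a, pol s a * g s a) :
    0 ≤ Exp T p1 p pol (fun τ => ∑ t : Fin T, g (τ.1 t.castSucc) (τ.2 t)) := by
  induction T generalizing p1 with
  | zero => simp [Exp]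
  | succ T ih =>
    rw [exp_succ]
    simp only [Fin.sum_univ_succ, Fin.castSucc_zero, Fin.cons_zero, Fin.cons_succ,
      ← Fin.succ_castSucc]
    have hsplit : ∀ s a, Exp T (p s a) p pol
          (fun τ => g s a + ∑ t : Fin T, g (τ.1 t.castSucc) (τ.2 t))
        = g s a + Exp T (p s a) p pol (fun τ => ∑ t : Fin T, g (τ.1 t.castSucc) (τ.2 t)) :=
      fun s a => by
        rw [exp_add T (p s a) p pol (fun _ => g s a),
          exp_const T (p s a) (hpsum s a) p hpsum pol hpolsum]
    simp_rw [hsplit, mul_add, Finset.sum_add_distrib]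
    refine add_nonneg (Finset.sum_nonneg fun s _ => ?_)
      (Finset.sum_nonneg fun s _ => Finset.sum_nonneg fun a _ =>
        mul_nonneg (mul_nonneg (hp1 s) (hpol s a)) (ih (p s a) (hp s a)))
    simp_rw [mul_assoc, ← Finset.mul_sum]
    exact mul_nonneg (hp1 s) (hg s)

/-- **Penalized form of Theorem 1.** For every adversarial reward `r̃`, the penalized
objective `E_{p^π}[Σ_t (r̃(s_t,a_t) + log Σ_{a'} exp(r(s_t,a') − r̃(s_t,a')))]` is at least
`J_MaxEnt(π; p, r)`, with equality for `r̃ = r − log π`; hence its infimum over `r̃`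
equals `J_MaxEnt(π; p, r)`. -/
theorem maxent_penalized_adversarial_rewards
    {S A : Type*} [Fintype S] [Fintype A] [Nonempty S] [Nonempty A]
    (T : ℕ) (hT : 1 ≤ T)
    (p1 : S → ℝ) (hp1 : ∀ s, 0 ≤ p1 s) (hp1sum : ∑ s : S, p1 s = 1)
    (p : S → A → S → ℝ) (hp : ∀ s a s', 0 ≤ p s a s')
    (hpsum : ∀ s a, ∑ s' : S, p s a s' = 1)
    (pol : S → A → ℝ) (hpol : ∀ s a, 0 < pol s a)
    (hpolsum : ∀ s, ∑ a : A, pol s a = 1)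
    (r : S → A → ℝ) :
    (∀ rt : S → A → ℝ,
      Exp T p1 p pol (fun τ => ∑ t : Fin T,
        (rt (τ.1 t.castSucc) (τ.2 t)
          + Real.log (∑ a' : A,
              Real.exp (r (τ.1 t.castSucc) a' - rt (τ.1 t.castSucc) a'))))
        ≥ JMaxEnt T p1 p pol r)
    ∧ Exp T p1 p pol (fun τ => ∑ t : Fin T,
        ((r (τ.1 t.castSucc) (τ.2 t) - Real.log (pol (τ.1 t.castSucc) (τ.2 t)))
          + Real.log (∑ a' : A, Real.exp (r (τ.1 t.castSucc) a'
              - (r (τ.1 t.castSucc) a' - Real.log (pol (τ.1 t.castSucc) a'))))))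
        = JMaxEnt T p1 p pol r
    ∧ (⨅ rt : S → A → ℝ,
        Exp T p1 p pol (fun τ => ∑ t : Fin T,
          (rt (τ.1 t.castSucc) (τ.2 t)
            + Real.log (∑ a' : A,
                Real.exp (r (τ.1 t.castSucc) a' - rt (τ.1 t.castSucc) a')))))
        = JMaxEnt T p1 p pol r := by
  have hlower : ∀ rt : S → A → ℝ, JMaxEnt T p1 p pol r ≤
      Exp T p1 p pol (fun τ => ∑ t : Fin T,
        (rt (τ.1 t.castSucc) (τ.2 t)
          + Real.log (∑ a' : A,
              Real.exp (r (τ.1 t.castSucc) a' - rt (τ.1 t.castSucc) a')))) := by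
    intro rt
    have h := exp_sum_nonneg T p1 hp1 p hp hpsum pol (fun s a => (hpol s a).le) hpolsum
      (fun s a => rt s a + Real.log (∑ a', Real.exp (r s a' - rt s a'))
        - (r s a - Real.log (pol s a))) (fun s => by
        have hG := gibbs_variational (pol s) (fun a => r s a - rt s a) (hpol s) (hpolsum s)
        have hE : ∑ a, pol s a * (rt s a + Real.log (∑ a', Real.exp (r s a' - rt s a'))
              - (r s a - Real.log (pol s a)))
            = (∑ a, pol s a) * Real.log (∑ a', Real.exp (r s a' - rt s a'))
              - ∑ a, pol s a * (r s a - rt s a - Real.log (pol s a)) := by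
          rw [Finset.sum_mul, ← Finset.sum_sub_distrib]
          exact Finset.sum_congr rfl fun a _ => by ring
        rw [hE, hpolsum, one_mul]
        exact sub_nonneg.2 hG)
    rw [← sub_nonneg]
    refine h.trans_eq ?_
    simp only [JMaxEnt, Exp, Finset.sum_sub_distrib, mul_sub]
  have heq : Exp T p1 p pol (fun τ => ∑ t : Fin T,
        ((r (τ.1 t.castSucc) (τ.2 t) - Real.log (pol (τ.1 t.castSucc) (τ.2 t)))
          + Real.log (∑ a' : A, Real.exp (r (τ.1 t.castSucc) a'
              - (r (τ.1 t.castSucc) a' - Real.log (pol (τ.1 t.castSucc) a'))))))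
        = JMaxEnt T p1 p pol r := by
    simp only [JMaxEnt, sub_sub_cancel, Real.exp_log (hpol _ _), hpolsum, Real.log_one, add_zero]
  refine ⟨hlower, heq, le_antisymm ?_ (le_ciInf hlower)⟩
  exact (ciInf_le ⟨_, Set.forall_mem_range.2 hlower⟩
    (fun s a => r s a - Real.log (pol s a))).trans_eq heq
end

section
/- Let X and Y be finite nonempty types and let p : X×Y → ℝ be a strictly positive probability mass function (p(x,y) > 0 and Σ_{x,y} p(x,y) = 1), with conditional p(x|y) = p(x,y) / Σ_{x'} p(x',y). Then for every function f : X×Y → ℝ, Σ_{x,y} p(x,y)·(−f(x,y) + log Σ_{x'∈X} exp(f(x',y))) ≥ Σ_{x,y} p(x,y)·(−log p(x|y)), with equality for f(x,y) = log p(x|y). Hence the conditional entropy E_{p(x,y)}[−log p(x|y)] equals the minimum over f of E_{p(x,y)}[−f(x,y) + log Σ_{x'} exp(f(x',y))]. (Appendix Lemma: the negative conditional entropy is the Fenchel dual of the log-sum-exp function.) -/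
/-!
For fixed `y` the difference of the two sides is the (unnormalised) Kullback-Leibler divergence
from `p(·|y)` to the softmax of `f(·, y)`, which is nonnegative because `log t ≤ t - 1`
(`gibbs_softmax`); summing over `y` gives the inequality. At `f = log p(·|y)` the log-sum-exp term
is `log 1 = 0`, so the bound is attained.
-/

open Finset Real

/-- Gibbs' inequality on one fibre: an unnormalised weight `q` with total mass `∑ q` is compared
with the softmax distribution `exp g / ∑ exp g`. -/
lemma gibbs_softmax {X : Type*} [Fintype X] [Nonempty X] (q g : X → ℝ) (hq : ∀ x, 0 < q x) :
    ∑ x, q x * (-(Real.log (q x / ∑ x', q x')))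
      ≤ ∑ x, q x * (-(g x) + Real.log (∑ x', Real.exp (g x'))) := by
  set S := ∑ x, q x with hS
  set Z := ∑ x, Real.exp (g x) with hZ
  have hS0 : 0 < S := Finset.sum_pos (fun x _ => hq x) Finset.univ_nonempty
  have hZ0 : 0 < Z := Finset.sum_pos (fun x _ => Real.exp_pos _) Finset.univ_nonempty
  -- `log t ≤ t - 1` at `t = (exp (g x) / Z) / (q x / S)`, multiplied by `q x`.
  have key : ∀ x, q x * (-(Real.log (q x / S)))
      ≤ q x * (-(g x) + Real.log Z) + (Real.exp (g x) * (S / Z) - q x) := by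
    intro x
    have hx := hq x
    have h := Real.log_le_sub_one_of_pos
      (show 0 < (Real.exp (g x) / Z) / (q x / S) by positivity)
    rw [Real.log_div (by positivity) (by positivity), Real.log_div (by positivity) hZ0.ne',
      Real.log_exp] at h
    have h2 := mul_le_mul_of_nonneg_left h hx.le
    have h3 : q x * ((Real.exp (g x) / Z) / (q x / S) - 1)
        = Real.exp (g x) * (S / Z) - q x := by
      field_simp
    rw [h3] at h2
    linarith
  have h := Finset.sum_le_sum (fun x (_ : x ∈ Finset.univ) => key x)
  rw [Finset.sum_add_distrib, Finset.sum_sub_distrib, ← Finset.sum_mul, ← hS, ← hZ,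
    mul_div_cancel₀ _ hZ0.ne', sub_self, add_zero] at h
  exact h

/-- **Appendix Lemma (Fenchel duality).** Negative conditional entropy is the Fenchel
dual of the log-sum-exp function: for a strictly positive pmf `p` on `X × Y` with
conditional `p(x|y) = p(x,y)/Σ_{x'} p(x',y)`, every `f` satisfies
`E[−f(x,y) + log Σ_{x'} exp f(x',y)] ≥ E[−log p(x|y)]`, with equality at `f = log p(x|y)`;
hence the conditional entropy is the attained minimum over `f`. -/
theorem neg_cond_entropy_fenchel_dual_logsumexp
    {X Y : Type*} [Fintype X] [Fintype Y] [Nonempty X] [Nonempty Y]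
    (p : X → Y → ℝ) (hp : ∀ x y, 0 < p x y) (hsum : ∑ x : X, ∑ y : Y, p x y = 1) :
    (∀ f : X → Y → ℝ,
      ∑ x : X, ∑ y : Y, p x y * (-(f x y) + Real.log (∑ x' : X, Real.exp (f x' y)))
        ≥ ∑ x : X, ∑ y : Y, p x y * (-(Real.log (p x y / ∑ x' : X, p x' y))))
    ∧ (∑ x : X, ∑ y : Y, p x y *
          (-(Real.log (p x y / ∑ x' : X, p x' y))
            + Real.log (∑ x' : X, Real.exp (Real.log (p x' y / ∑ x'' : X, p x'' y))))
        = ∑ x : X, ∑ y : Y, p x y * (-(Real.log (p x y / ∑ x' : X, p x' y))))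
    ∧ IsLeast
        {v : ℝ | ∃ f : X → Y → ℝ,
          v = ∑ x : X, ∑ y : Y, p x y *
            (-(f x y) + Real.log (∑ x' : X, Real.exp (f x' y)))}
        (∑ x : X, ∑ y : Y, p x y * (-(Real.log (p x y / ∑ x' : X, p x' y)))) := by
  have hle : ∀ f : X → Y → ℝ,
      ∑ x : X, ∑ y : Y, p x y * (-(Real.log (p x y / ∑ x' : X, p x' y)))
        ≤ ∑ x : X, ∑ y : Y, p x y * (-(f x y) + Real.log (∑ x' : X, Real.exp (f x' y))) := by
    intro f
    rw [Finset.sum_comm, Finset.sum_comm (f := fun x y => p x y * (-(f x y) + _))]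
    exact Finset.sum_le_sum fun y _ =>
      gibbs_softmax (fun x => p x y) (fun x => f x y) (fun x => hp x y)
  have hnorm : ∀ y, ∑ x' : X, Real.exp (Real.log (p x' y / ∑ x'' : X, p x'' y)) = 1 := by
    intro y
    have hS0 : 0 < ∑ x, p x y := Finset.sum_pos (fun x _ => hp x y) Finset.univ_nonempty
    simp_rw [fun x => Real.exp_log (div_pos (hp x y) hS0)]
    rw [← Finset.sum_div, div_self hS0.ne']
  have heq : ∑ x : X, ∑ y : Y, p x y *
          (-(Real.log (p x y / ∑ x' : X, p x' y))
            + Real.log (∑ x' : X, Real.exp (Real.log (p x' y / ∑ x'' : X, p x'' y))))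
        = ∑ x : X, ∑ y : Y, p x y * (-(Real.log (p x y / ∑ x' : X, p x' y))) := by
    simp only [hnorm, Real.log_one, add_zero]
  refine ⟨hle, heq, ⟨fun x y => Real.log (p x y / ∑ x' : X, p x' y), heq.symm⟩, ?_⟩
  rintro v ⟨f, rfl⟩
  exact hle f
end

section
/- Fix a finite-horizon MDP with finite nonempty state space S, finite nonempty action space A, horizon T ≥ 1, initial distribution p₁, strictly positive dynamics p, and a full-support policy π. Then for every function g : S×A×S → ℝ (the adversary's log-dynamics perturbation Δr), E_{p^π}[Σ_{t=1}^T (−g(s_{t+1},s_t,a_t) + log Σ_{a'∈A, s'∈S} exp(g(s',s_t,a')))] ≥ E_{p^π}[Σ_{t=1}^T (−log π(a_t|s_t) − log p(s_{t+1}|s_t,a_t))], with equality for g(s',s,a) = log(π(a|s)·p(s'|s,a)). Hence the infimum over g of the left-hand side equals the expected sum of policy entropy and dynamics entropy on the right-hand side. (Step 3 of the proof of Theorem 2: the adversary's penalty is the Fenchel dual of the joint action–next-state entropy.) -/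
/-!
With `q_s(a, s') = π(a|s) p(s'|s, a)`, the difference of the two integrands at time `t` is
`h(s_t, a_t, s_{t+1})`, where `h(s, a, s') = -g(s, a, s') + log Z_s + log q_s(a, s')` and
`Z_s = ∑ exp g(s, ·, ·)`. The mean of `h(s, ·, ·)` under `q_s` is the relative entropy of `q_s`
with respect to the Gibbs distribution `exp g(s, ·, ·) / Z_s`, so it is nonnegative
(`gibbs_nonneg`). A sum over time of quantities with nonnegative one-step conditional mean has
nonnegative expectation (`Exp_sum_nonneg`), by induction on the horizon: the first transition is
split off with `Exp_succ`, and `Exp_initial` gives the law of the initial state. For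
`g = log q` one has `Z_s = 1`, so the integrands agree pointwise and the infimum is attained.
-/

open Finset Real

/-- Conditioning on the first state and action: what remains is a trajectory of horizon `T`
whose initial distribution is `p(· | s, a)`. -/
lemma Exp_succ {S A : Type*} [Fintype S] [Fintype A] (T : ℕ)
    (q : S → ℝ) (p : S → A → S → ℝ) (pol : S → A → ℝ)
    (f : ((Fin (T + 1 + 1) → S) × (Fin (T + 1) → A)) → ℝ) :
    Exp (T + 1) q p pol f = ∑ s : S, ∑ a : A, q s * pol s a *
      Exp T (p s a) p pol (fun τ => f (Fin.cons s τ.1, Fin.cons a τ.2)) := by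
  unfold Exp
  rw [Fintype.sum_prod_type,
    ← (Fin.consEquiv (fun _ : Fin (T + 1 + 1) => S)).sum_comp, Fintype.sum_prod_type]
  refine Finset.sum_congr rfl fun s _ => ?_
  simp_rw [← (Fin.consEquiv (fun _ : Fin (T + 1) => A)).sum_comp, Fintype.sum_prod_type]
  rw [Finset.sum_comm]
  refine Finset.sum_congr rfl fun a _ => ?_
  rw [Finset.mul_sum]
  refine Finset.sum_congr rfl fun σ _ => ?_
  rw [Finset.mul_sum]
  refine Finset.sum_congr rfl fun α _ => ?_
  change trajProb (T + 1) q p pol (Fin.cons s σ, Fin.cons a α) * f (Fin.cons s σ, Fin.cons a α)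
    = q s * pol s a * (trajProb T (p s a) p pol (σ, α) * f (Fin.cons s σ, Fin.cons a α))
  simp only [trajProb, Fin.prod_univ_succ, Fin.cons_zero, Fin.cons_succ,
    Fin.castSucc_zero, ← Fin.succ_castSucc]
  ring

/-- The initial state has law `q`. -/
lemma Exp_initial {S A : Type*} [Fintype S] [Fintype A] (T : ℕ)
    (p : S → A → S → ℝ) (hpsum : ∀ s a, ∑ s' : S, p s a s' = 1)
    (pol : S → A → ℝ) (hpolsum : ∀ s, ∑ a : A, pol s a = 1) (q f : S → ℝ) :
    Exp T q p pol (fun τ => f (τ.1 0)) = ∑ s : S, q s * f s := by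
  induction T generalizing q f with
  | zero =>
    unfold Exp
    rw [Fintype.sum_prod_type, ← (Equiv.funUnique (Fin 1) S).symm.sum_comp]
    simp [trajProb]
  | succ T ih =>
    rw [Exp_succ]
    refine Finset.sum_congr rfl fun s _ => ?_
    simp only [Fin.cons_zero]
    have h1 : ∀ a, Exp T (p s a) p pol (fun _ => f s) = f s := fun a => by
      rw [ih (p s a) (fun _ => f s), ← Finset.sum_mul, hpsum, one_mul]
    simp_rw [h1]
    rw [← Finset.sum_mul, ← Finset.mul_sum, hpolsum, mul_one]

lemma Exp_add {S A : Type*} [Fintype S] [Fintype A] (T : ℕ)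
    (q : S → ℝ) (p : S → A → S → ℝ) (pol : S → A → ℝ)
    (f g : ((Fin (T + 1) → S) × (Fin T → A)) → ℝ) :
    Exp T q p pol (fun τ => f τ + g τ) = Exp T q p pol f + Exp T q p pol g := by
  simp [Exp, mul_add, Finset.sum_add_distrib]

/-- If `h(s, ·, ·)` has nonnegative mean under one step of the chain from every state `s`, then
its sum along a trajectory has nonnegative expectation. -/
lemma Exp_sum_nonneg {S A : Type*} [Fintype S] [Fintype A] (T : ℕ)
    (p : S → A → S → ℝ) (hp : ∀ s a s', 0 < p s a s')
    (hpsum : ∀ s a, ∑ s' : S, p s a s' = 1)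
    (pol : S → A → ℝ) (hpol : ∀ s a, 0 < pol s a)
    (hpolsum : ∀ s, ∑ a : A, pol s a = 1)
    (h : S → A → S → ℝ) (hh : ∀ s, 0 ≤ ∑ a : A, ∑ s' : S, pol s a * p s a s' * h s a s')
    (q : S → ℝ) (hq : ∀ s, 0 ≤ q s) :
    0 ≤ Exp T q p pol
      (fun τ => ∑ t : Fin T, h (τ.1 t.castSucc) (τ.2 t) (τ.1 t.succ)) := by
  induction T generalizing q with
  | zero => simp [Exp]
  | succ T ih =>
    rw [Exp_succ]
    simp only [Fin.sum_univ_succ, Fin.cons_zero, Fin.cons_succ, Fin.castSucc_zero,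
      ← Fin.succ_castSucc]
    refine Finset.sum_nonneg fun s _ => ?_
    calc 0 ≤ q s * ∑ a : A, ∑ s' : S, pol s a * p s a s' * h s a s' :=
          mul_nonneg (hq s) (hh s)
      _ = ∑ a : A, q s * pol s a * ∑ s' : S, p s a s' * h s a s' := by
          simp only [Finset.mul_sum, mul_assoc]
      _ ≤ _ := by
          refine Finset.sum_le_sum fun a _ =>
            mul_le_mul_of_nonneg_left ?_ (mul_nonneg (hq s) (hpol s a).le)
          rw [Exp_add, Exp_initial T p hpsum pol hpolsum (p s a) (h s a)]
          exact le_add_of_nonneg_right (ih (p s a) fun u => (hp s a u).le)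

/-- Gibbs' inequality for a positive probability mass function `w` and the distribution
proportional to `exp g`. -/
lemma gibbs_nonneg {ι : Type*} [Fintype ι] [Nonempty ι] (w g : ι → ℝ) (hw : ∀ i, 0 < w i)
    (hsum : ∑ i, w i = 1) :
    0 ≤ ∑ i, w i * (-g i + Real.log (∑ j, Real.exp (g j)) + Real.log (w i)) := by
  set Z := ∑ j, Real.exp (g j) with hZ
  have hZpos : 0 < Z := Finset.sum_pos (fun j _ => Real.exp_pos _) Finset.univ_nonempty
  have hsum0 : ∑ i, (w i - Real.exp (g i) / Z) = 0 := by
    rw [Finset.sum_sub_distrib, ← Finset.sum_div, ← hZ, hsum, div_self hZpos.ne', sub_self]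
  rw [← hsum0]
  refine Finset.sum_le_sum fun i _ => ?_
  -- `log x ≤ x - 1` at the ratio of the two densities
  have hpos : 0 < Real.exp (g i) / (Z * w i) := by have := hw i; positivity
  have hlog := Real.log_le_sub_one_of_pos hpos
  rw [Real.log_div (Real.exp_pos _).ne' (mul_pos hZpos (hw i)).ne', Real.log_exp,
    Real.log_mul hZpos.ne' (hw i).ne'] at hlog
  have hmul := mul_le_mul_of_nonneg_left hlog (hw i).le
  have heq : w i * (Real.exp (g i) / (Z * w i) - 1) = Real.exp (g i) / Z - w i := by
    have := (hw i).ne'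
    field_simp
  rw [heq] at hmul
  linarith

/-- **Step 3 of the proof of Theorem 2.** The adversary's penalty is the Fenchel dual of
the joint action–next-state entropy: for every perturbation `g(s,a,s')`,
`E_{p^π}[Σ_t (−g(s_t,a_t,s_{t+1}) + log Σ_{a',s'} exp g(s_t,a',s'))]
  ≥ E_{p^π}[Σ_t (−log π(a_t|s_t) − log p(s_{t+1}|s_t,a_t))]`, with equality at
`g = log(π·p)`; hence the infimum over `g` equals the right-hand side. -/
theorem adversary_penalty_fenchel_dual_joint_entropy
    {S A : Type*} [Fintype S] [Fintype A] [Nonempty S] [Nonempty A]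
    (T : ℕ) (hT : 1 ≤ T)
    (p1 : S → ℝ) (hp1 : ∀ s, 0 ≤ p1 s) (hp1sum : ∑ s : S, p1 s = 1)
    (p : S → A → S → ℝ) (hp : ∀ s a s', 0 < p s a s')
    (hpsum : ∀ s a, ∑ s' : S, p s a s' = 1)
    (pol : S → A → ℝ) (hpol : ∀ s a, 0 < pol s a)
    (hpolsum : ∀ s, ∑ a : A, pol s a = 1) :
    (∀ g : S → A → S → ℝ,
      Exp T p1 p pol (fun τ => ∑ t : Fin T,
        (-(g (τ.1 t.castSucc) (τ.2 t) (τ.1 t.succ))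
          + Real.log (∑ a' : A, ∑ s' : S, Real.exp (g (τ.1 t.castSucc) a' s'))))
        ≥ Exp T p1 p pol (fun τ => ∑ t : Fin T,
            (-(Real.log (pol (τ.1 t.castSucc) (τ.2 t)))
              - Real.log (p (τ.1 t.castSucc) (τ.2 t) (τ.1 t.succ)))))
    ∧ Exp T p1 p pol (fun τ => ∑ t : Fin T,
        (-(Real.log (pol (τ.1 t.castSucc) (τ.2 t)
              * p (τ.1 t.castSucc) (τ.2 t) (τ.1 t.succ)))
          + Real.log (∑ a' : A, ∑ s' : S,
              Real.exp (Real.log (pol (τ.1 t.castSucc) a' * p (τ.1 t.castSucc) a' s')))))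
        = Exp T p1 p pol (fun τ => ∑ t : Fin T,
            (-(Real.log (pol (τ.1 t.castSucc) (τ.2 t)))
              - Real.log (p (τ.1 t.castSucc) (τ.2 t) (τ.1 t.succ))))
    ∧ (⨅ g : S → A → S → ℝ,
        Exp T p1 p pol (fun τ => ∑ t : Fin T,
          (-(g (τ.1 t.castSucc) (τ.2 t) (τ.1 t.succ))
            + Real.log (∑ a' : A, ∑ s' : S, Real.exp (g (τ.1 t.castSucc) a' s')))))
        = Exp T p1 p pol (fun τ => ∑ t : Fin T,
            (-(Real.log (pol (τ.1 t.castSucc) (τ.2 t)))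
              - Real.log (p (τ.1 t.castSucc) (τ.2 t) (τ.1 t.succ)))) := by
  have hge : ∀ g : S → A → S → ℝ,
      Exp T p1 p pol (fun τ => ∑ t : Fin T,
        (-(g (τ.1 t.castSucc) (τ.2 t) (τ.1 t.succ))
          + Real.log (∑ a' : A, ∑ s' : S, Real.exp (g (τ.1 t.castSucc) a' s'))))
        ≥ Exp T p1 p pol (fun τ => ∑ t : Fin T,
            (-(Real.log (pol (τ.1 t.castSucc) (τ.2 t)))
              - Real.log (p (τ.1 t.castSucc) (τ.2 t) (τ.1 t.succ)))) := by
    intro g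
    have key := Exp_sum_nonneg T p hp hpsum pol hpol hpolsum
      (fun s a s' => -g s a s' + Real.log (∑ a' : A, ∑ s' : S, Real.exp (g s a' s'))
        + Real.log (pol s a * p s a s')) (fun s => by
          have hG := gibbs_nonneg (fun i : A × S => pol s i.1 * p s i.1 i.2)
            (fun i => g s i.1 i.2) (fun i => mul_pos (hpol _ _) (hp _ _ _))
            (by simp [Fintype.sum_prod_type, ← Finset.mul_sum, hpsum, hpolsum])
          simpa only [Fintype.sum_prod_type] using hG) p1 hp1
    rw [ge_iff_le, ← sub_nonneg]
    refine key.trans_eq ?_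
    rw [eq_sub_iff_add_eq, ← Exp_add]
    congr 1
    funext τ
    rw [← Finset.sum_add_distrib]
    refine Finset.sum_congr rfl fun t _ => ?_
    rw [Real.log_mul (hpol _ _).ne' (hp _ _ _).ne']
    ring
  have heq : Exp T p1 p pol (fun τ => ∑ t : Fin T,
        (-(Real.log (pol (τ.1 t.castSucc) (τ.2 t)
              * p (τ.1 t.castSucc) (τ.2 t) (τ.1 t.succ)))
          + Real.log (∑ a' : A, ∑ s' : S,
              Real.exp (Real.log (pol (τ.1 t.castSucc) a' * p (τ.1 t.castSucc) a' s')))))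
        = Exp T p1 p pol (fun τ => ∑ t : Fin T,
            (-(Real.log (pol (τ.1 t.castSucc) (τ.2 t)))
              - Real.log (p (τ.1 t.castSucc) (τ.2 t) (τ.1 t.succ)))) := by
    congr 1
    funext τ
    refine Finset.sum_congr rfl fun t _ => ?_
    have hZ : ∀ s, ∑ a' : A, ∑ s' : S, Real.exp (Real.log (pol s a' * p s a' s')) = 1 := by
      intro s
      simp only [Real.exp_log (mul_pos (hpol _ _) (hp _ _ _)), ← Finset.mul_sum, hpsum, mul_one,
        hpolsum]
    rw [hZ, Real.log_one, Real.log_mul (hpol _ _).ne' (hp _ _ _).ne']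
    ring
  refine ⟨hge, heq, le_antisymm ?_ (le_ciInf hge)⟩
  -- the lower bound makes the real-valued infimum genuine, and `g = log (π p)` attains it
  exact (ciInf_le ⟨_, Set.forall_mem_range.2 hge⟩
    (fun s a s' => Real.log (pol s a * p s a s'))).trans_eq heq
end

section
/- Fix a finite-horizon MDP with finite nonempty state space S, finite nonempty action space A, horizon T ≥ 1, initial distribution p₁, strictly positive dynamics p, and a full-support policy π. Suppose g : S×A×S → ℝ satisfies the adversary's optimality condition exp(g(s',s,a)) / Σ_{a''∈A, s''∈S} exp(g(s'',s,a'')) = π(a|s)·p(s'|s,a) for all s, a, s', and define p̃(s'|s,a) = p(s'|s,a)·exp(−g(s',s,a)). Then the adversary's constraint value equals ε = E_{p^π}[Σ_{t=1}^T log Σ_{a'∈A, s'∈S} exp(g(s',s_t,a'))] = E_{p^π}[Σ_{t=1}^T (−log p̃(s_{t+1}|s_t,a_t) − log π(a_t|s_t))]; moreover, if p̃(s'|s,a) ≤ 1 for all s,a,s', then ε ≥ E_{p^π}[Σ_{t=1}^T −log π(a_t|s_t)], i.e. the size of the robust set is lower-bounded by the expected sum of the policy's entropies. (Lemma 1: the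 adversary's budget ε equals the expected entropies of the perturbed dynamics and the policy, and is at least the policy's entropy.) -/
/-!
Writing `Z(s) = Σ_{a,s'} exp g(s,a,s')`, the logarithm of the optimality condition
`exp g / Z = π p` gives `log Z(s) = -log (p exp (-g)) - log π` for every transition `(s,a,s')`.
Hence both integrands agree on each trajectory, not merely in expectation. If `p̃ ≤ 1`, the term
`-log p̃` is nonnegative, and the bound follows as trajectory weights are nonnegative.
-/

open Finset Real

/-- **Lemma 1 (size of the robust set).** If `g` satisfies the adversary's optimality
condition `exp g(s,a,s') / Σ_{a'',s''} exp g(s,a'',s'') = π(a|s)·p(s'|s,a)` and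
`p̃(s'|s,a) = p(s'|s,a)·exp(−g(s,a,s'))`, then the adversary's budget
`ε = E_{p^π}[Σ_t log Σ_{a',s'} exp g(s_t,a',s')]` equals
`E_{p^π}[Σ_t (−log p̃(s_{t+1}|s_t,a_t) − log π(a_t|s_t))]`; moreover, if `p̃ ≤ 1`
pointwise then `ε ≥ E_{p^π}[Σ_t −log π(a_t|s_t)]`. -/
theorem robust_set_budget_eq_entropies
    {S A : Type*} [Fintype S] [Fintype A] [Nonempty S] [Nonempty A]
    (T : ℕ) (hT : 1 ≤ T)
    (p1 : S → ℝ) (hp1 : ∀ s, 0 ≤ p1 s) (hp1sum : ∑ s : S, p1 s = 1)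
    (p : S → A → S → ℝ) (hp : ∀ s a s', 0 < p s a s')
    (hpsum : ∀ s a, ∑ s' : S, p s a s' = 1)
    (pol : S → A → ℝ) (hpol : ∀ s a, 0 < pol s a)
    (hpolsum : ∀ s, ∑ a : A, pol s a = 1)
    (g : S → A → S → ℝ)
    (hg : ∀ s a s', Real.exp (g s a s')
        / (∑ a'' : A, ∑ s'' : S, Real.exp (g s a'' s'')) = pol s a * p s a s')
    (pt : S → A → S → ℝ)
    (hptdef : ∀ s a s', pt s a s' = p s a s' * Real.exp (-(g s a s'))) :
    Exp T p1 p pol (fun τ => ∑ t : Fin T,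
        Real.log (∑ a' : A, ∑ s' : S, Real.exp (g (τ.1 t.castSucc) a' s')))
      = Exp T p1 p pol (fun τ => ∑ t : Fin T,
          (-(Real.log (pt (τ.1 t.castSucc) (τ.2 t) (τ.1 t.succ)))
            - Real.log (pol (τ.1 t.castSucc) (τ.2 t))))
    ∧ ((∀ s a s', pt s a s' ≤ 1) →
        Exp T p1 p pol (fun τ => ∑ t : Fin T,
            Real.log (∑ a' : A, ∑ s' : S, Real.exp (g (τ.1 t.castSucc) a' s')))
          ≥ Exp T p1 p pol (fun τ => ∑ t : Fin T,
              -(Real.log (pol (τ.1 t.castSucc) (τ.2 t))))) := by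
  have key : ∀ s a s', Real.log (∑ a' : A, ∑ s' : S, Real.exp (g s a' s'))
      = -(Real.log (pt s a s')) - Real.log (pol s a) := by
    intro s a s'
    have hZ : 0 < ∑ a' : A, ∑ s' : S, Real.exp (g s a' s') :=
      Finset.sum_pos (fun _ _ => Finset.sum_pos (fun _ _ => Real.exp_pos _)
        Finset.univ_nonempty) Finset.univ_nonempty
    have h := congrArg Real.log (hg s a s')
    rw [Real.log_div (Real.exp_pos _).ne' hZ.ne', Real.log_exp,
      Real.log_mul (hpol s a).ne' (hp s a s').ne'] at h
    rw [hptdef, Real.log_mul (hp s a s').ne' (Real.exp_pos _).ne', Real.log_exp]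
    linarith
  refine ⟨?_, fun hle => ?_⟩
  · unfold Exp
    refine Finset.sum_congr rfl fun τ _ => ?_
    congr 1
    exact Finset.sum_congr rfl fun t _ => key _ _ _
  · unfold Exp
    refine Finset.sum_le_sum fun τ _ => mul_le_mul_of_nonneg_left ?_ ?_
    · refine Finset.sum_le_sum fun t _ => ?_
      rw [key _ (τ.2 t) (τ.1 t.succ)]
      have hpt : 0 ≤ pt (τ.1 t.castSucc) (τ.2 t) (τ.1 t.succ) := by
        rw [hptdef]
        exact (mul_pos (hp _ _ _) (Real.exp_pos _)).le
      linarith [Real.log_nonpos hpt (hle _ _ _)]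
    · exact mul_nonneg (hp1 _)
        (Finset.prod_nonneg fun t _ => (mul_pos (hpol _ _) (hp _ _ _)).le)
end

section
/- Let S and A be finite nonempty types and r : S×A → ℝ a reward function. For a temperature α > 0, define the robust set R_r^α = { r + u : u : S×A → ℝ, u(s,a) ≥ 0 for all s,a, and Σ_{a∈A} exp(−u(s,a)/α) ≤ 1 for every s ∈ S }. Then the robust sets are antitone in the temperature: for all 0 < α₁ < α₂, R_r^{α₂} ⊆ R_r^{α₁}. (Appendix, Temperatures section: increasing the entropy coefficient shrinks the set of reward functions against which MaxEnt RL is robust; the proof uses that exp(−x/α) is increasing in α for x ≥ 0.) -/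
open Finset Real

/-- **Appendix (Temperatures).** The robust sets
`R_r^α = { r + u | u ≥ 0, ∀ s, Σ_a exp(−u(s,a)/α) ≤ 1 }` are antitone in the
temperature: for `0 < α₁ < α₂`, `R_r^{α₂} ⊆ R_r^{α₁}`. -/
theorem robust_reward_set_antitone_in_temperature
    {S A : Type*} [Fintype S] [Fintype A] [Nonempty S] [Nonempty A]
    (r : S → A → ℝ) (α₁ α₂ : ℝ) (hα₁ : 0 < α₁) (hα : α₁ < α₂) :
    {r' : S → A → ℝ | ∃ u : S → A → ℝ, (∀ s a, 0 ≤ u s a) ∧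
        (∀ s, ∑ a : A, Real.exp (-(u s a) / α₂) ≤ 1) ∧
        r' = fun s a => r s a + u s a}
      ⊆ {r' : S → A → ℝ | ∃ u : S → A → ℝ, (∀ s a, 0 ≤ u s a) ∧
          (∀ s, ∑ a : A, Real.exp (-(u s a) / α₁) ≤ 1) ∧
          r' = fun s a => r s a + u s a} := by
  rintro _ ⟨u, hu, hsum, rfl⟩
  -- The same perturbation works: for `x ≥ 0`, `exp (-x / α)` is monotone in `α > 0`.
  refine ⟨u, hu, fun s => le_trans (Finset.sum_le_sum fun a _ => ?_) (hsum s), rfl⟩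
  rw [Real.exp_le_exp, neg_div, neg_div, neg_le_neg_iff]
  exact div_le_div_of_nonneg_left (hu s a) hα₁ hα.le
end
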